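/- Let k ≥ 2, ω = exp(2πi/k), and let d_0, ..., d_{k-1} be positive natural numbers with n = Σ d_i. Let u ∈ M_n(ℂ) be the block-diagonal unitary acting as ω^i on a chosen subspace V_i of dimension d_i (the V_i forming an orthogonal direct sum decomposition of ℂ^n). Set d + 1 = ⌈(max_i d_i)/(min_i d_i)⌉. Then there exist normal matrices x_0, ..., x_d ∈ M_n(ℂ) such that every eigenvalue of each x_j is either 0 or a k-th root of unity, u x_j u^* = ω x_j for all j, and Σ_{j=0}^d x_j x_j^* is invertible. -/

import Mathlib

/-!
In an orthonormal basis `(i, a)`, `a < d i`, of eigenvectors of `u`, choose a set of `m` basis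
vectors in each of the `k` eigenspaces. The cyclic shift of these `k * m` vectors from the `i`-th
eigenspace to the next is a unitary of order `k` on their span, hence, extended by `0`, a normal
matrix with spectrum in the `k`-th roots of unity and `0`; conjugation by `u` multiplies it by `ω`.
Since `m ≤ d i ≤ N * m`, `N` windows of length `m` cover every `Fin (d i)`. The sum of the
`x j * star (x j)` is then a sum of projections whose ranges together span the whole space.
-/

open Matrix Module

section Spectrum

variable {𝕜 A B : Type*} [Field 𝕜] [Ring A] [Algebra 𝕜 A] [Ring B] [Algebra 𝕜 B]

theorem pow_eq_one_of_mem_spectrum {a : A} {k : ℕ} (ha : a ^ k = 1) {z : 𝕜}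
    (hz : z ∈ spectrum 𝕜 a) : z ^ k = 1 := by
  have : Nontrivial A := not_subsingleton_iff_nontrivial.1 fun _ ↦ by
    simp [spectrum.of_subsingleton] at hz
  simpa only [ha, spectrum.one_eq, Set.mem_singleton_iff] using spectrum.pow_mem_pow a k hz

theorem spectrum_map_subset_of_pow_eq_one (φ : A →ₙₐ[𝕜] B) {a : A} {k : ℕ} (ha : a ^ k = 1) :
    spectrum 𝕜 (φ a) ⊆ {z | z = 0 ∨ z ^ k = 1} := by
  intro z hz
  have hza : z ∈ spectrum 𝕜 a ∪ {0} := by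
    rw [← quasispectrum_eq_spectrum_union_zero]
    exact NonUnitalAlgHom.quasispectrum_apply_subset φ a (spectrum_subset_quasispectrum 𝕜 _ hz)
  exact hza.symm.imp id (pow_eq_one_of_mem_spectrum ha)

end Spectrum

section IsometryConj

variable {R ι β : Type*} [CommSemiring R] [StarRing R] [Fintype ι] [Fintype β] [DecidableEq β]

/-- Conjugation `S ↦ V * S * Vᴴ` by an isometry `V`: it lets `S` act on the range of `V` and extends
it by `0` to the orthogonal complement. It is not unital unless `V` is unitary. -/
def isometryConj (V : Matrix ι β R) (hV : Vᴴ * V = 1) : Matrix β β R →⋆ₙₐ[R] Matrix ι ι R where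
  toFun S := V * S * Vᴴ
  map_smul' r S := by simp
  map_zero' := by simp
  map_add' S T := by rw [Matrix.mul_add, Matrix.add_mul]
  map_mul' S T := by
    calc V * (S * T) * Vᴴ = V * S * (Vᴴ * V) * T * Vᴴ := by
          simp only [hV, Matrix.mul_one, Matrix.mul_assoc]
      _ = V * S * Vᴴ * (V * T * Vᴴ) := by simp only [Matrix.mul_assoc]
  map_star' S := by
    simp only [star_eq_conjTranspose, conjTranspose_mul, conjTranspose_conjTranspose,
      Matrix.mul_assoc]

theorem isometryConj_apply (V : Matrix ι β R) (hV : Vᴴ * V = 1) (S : Matrix β β R) :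
    isometryConj V hV S = V * S * Vᴴ :=
  rfl

theorem isometryConj_mul_star_self {V : Matrix ι β R} (hV : Vᴴ * V = 1) {S : Matrix β β R}
    (hS : S ∈ unitary (Matrix β β R)) :
    isometryConj V hV S * star (isometryConj V hV S) = V * Vᴴ := by
  rw [← map_star, ← map_mul, Unitary.mul_star_self_of_mem hS, isometryConj_apply, Matrix.mul_one]

theorem mul_isometryConj_mul_star {V : Matrix ι β R} (hV : Vᴴ * V = 1) {u : Matrix ι ι R}
    {D : Matrix β β R} (huV : u * V = V * D) (S : Matrix β β R) :
    u * isometryConj V hV S * star u = isometryConj V hV (D * S * star D) := by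
  calc u * (V * S * Vᴴ) * uᴴ = u * V * S * (u * V)ᴴ := by
        simp only [conjTranspose_mul, Matrix.mul_assoc]
    _ = V * (D * S * Dᴴ) * Vᴴ := by
        rw [huV]
        simp only [conjTranspose_mul, Matrix.mul_assoc]

end IsometryConj

section Submatrix

variable {R ι β γ : Type*} [Fintype ι]

theorem conjTranspose_submatrix_mul_submatrix [NonAssocSemiring R] [StarRing R] [DecidableEq β]
    [DecidableEq γ] {U : Matrix ι β R} (hU : Uᴴ * U = 1) {e : γ → β} (he : e.Injective) :
    (U.submatrix id e)ᴴ * U.submatrix id e = 1 := by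
  rw [conjTranspose_submatrix, ← submatrix_mul _ _ _ _ _ Function.bijective_id, hU,
    submatrix_one _ he]

theorem mul_submatrix_eq_submatrix_mul_diagonal [NonAssocSemiring R] [Fintype β] [DecidableEq β]
    [Fintype γ] [DecidableEq γ] {u : Matrix ι ι R} {U : Matrix ι β R} {c : β → R}
    (h : u * U = U * diagonal c) (e : γ → β) :
    u * U.submatrix id e = U.submatrix id e * diagonal (c ∘ e) := by
  ext s p
  rw [mul_diagonal]
  exact (congrFun₂ h s (e p)).trans (mul_diagonal _ _ _ _)

open scoped ComplexOrder in
theorem isUnit_sum_submatrix_mul_conjTranspose {J 𝕜 : Type*} [RCLike 𝕜] [DecidableEq ι] [Fintype β]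
    [Fintype γ] [Fintype J] {U : Matrix ι β 𝕜} (hU : U * Uᴴ = 1) {e : J → γ → β}
    (he : ∀ b, ∃ j a, e j a = b) :
    IsUnit (∑ j, U.submatrix id (e j) * (U.submatrix id (e j))ᴴ) := by
  -- The sum is `W * Wᴴ`, where every column of `U` occurs among the columns of `W`.
  let W : Matrix ι (J × γ) 𝕜 := U.submatrix id fun q ↦ e q.1 q.2
  have hsum : ∑ j, U.submatrix id (e j) * (U.submatrix id (e j))ᴴ = W * Wᴴ := by
    ext s t
    simp only [W, Matrix.sum_apply, mul_apply, Fintype.sum_prod_type, conjTranspose_apply,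
      submatrix_apply]
  have hW : Function.Injective W.vecMul := by
    intro v w hvw
    have hUvw : v ᵥ* U = w ᵥ* U := by
      ext b
      obtain ⟨j, a, rfl⟩ := he b
      exact congrFun hvw (j, a)
    simpa only [vecMul_vecMul, hU, vecMul_one] using congrArg (· ᵥ* Uᴴ) hUvw
  rw [hsum]
  exact (PosDef.mul_conjTranspose_self W hW).isUnit

end Submatrix

section PermMatrix

variable {R β : Type*} [Fintype β] [DecidableEq β] (σ : Equiv.Perm β)

theorem permMatrix_pow [Semiring R] (l : ℕ) : σ.permMatrix R ^ l = (σ ^ l).permMatrix R := by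
  induction l with
  | zero => rw [pow_zero, pow_zero, permMatrix_one]
  | succ l ih => rw [pow_succ', ih, pow_succ, permMatrix_mul]

theorem permMatrix_mem_unitary [Semiring R] [StarRing R] :
    σ.permMatrix R ∈ unitary (Matrix β β R) := by
  rw [Unitary.mem_iff, star_eq_conjTranspose, conjTranspose_permMatrix, ← permMatrix_mul,
    ← permMatrix_mul, mul_inv_cancel, inv_mul_cancel, permMatrix_one]
  exact ⟨rfl, rfl⟩

theorem diagonal_mul_permMatrix_mul_star [CommSemiring R] [StarRing R] {c : β → R} {ω : R}
    (hc : ∀ p, c p * star (c (σ p)) = ω) :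
    diagonal c * σ.permMatrix R * star (diagonal c) = ω • σ.permMatrix R := by
  ext p q
  rw [star_eq_conjTranspose, diagonal_conjTranspose, mul_diagonal, diagonal_mul, Matrix.smul_apply,
    smul_eq_mul, Equiv.Perm.permMatrix, PEquiv.toMatrix_apply, Equiv.toPEquiv_apply]
  simp only [Option.mem_some_iff, mul_ite, ite_mul, mul_one, mul_zero, zero_mul]
  split_ifs with hpq
  · rw [← hpq, Pi.star_apply, hc]
  · rfl

end PermMatrix

section CyclicShift

variable (k : ℕ) [NeZero k] (α : Type*)

/-- The permutation `(i, a) ↦ (i - 1, a)` of `Fin k × α`, with `i - 1` taken modulo `k`. Its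
permutation matrix sends the basis vector at `(i, a)` to the one at `(i + 1, a)`. -/
def cyclicShift : Equiv.Perm (Fin k × α) :=
  (Equiv.subRight 1).prodCongr (Equiv.refl α)

theorem cyclicShift_pow_self : cyclicShift k α ^ k = 1 := by
  have hpow (l : ℕ) (p : Fin k × α) : (cyclicShift k α ^ l) p = (p.1 - l • (1 : Fin k), p.2) := by
    induction l with
    | zero => simp
    | succ l ih =>
      rw [pow_succ', Equiv.Perm.mul_apply, ih, succ_nsmul, ← sub_sub]
      rfl
  have hk : k • (1 : Fin k) = 0 := by
    simpa only [Nat.card_eq_fintype_card, Fintype.card_fin] using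
      card_nsmul_eq_zero (x := (1 : Fin k))
  ext1 p
  rw [hpow, hk, sub_zero, Equiv.Perm.one_apply]

variable {k}

theorem pow_val_add_one {M : Type*} [Monoid M] {ω : M} (hω : ω ^ k = 1) (i : Fin k) :
    ω ^ ((i + 1 : Fin k) : ℕ) = ω * ω ^ (i : ℕ) := by
  rw [Fin.val_add, ← pow_eq_pow_mod _ hω, Fin.val_one', pow_add, ← pow_eq_pow_mod _ hω, pow_one,
    ← pow_succ, pow_succ']

theorem pow_val_mul_star_pow_val_sub_one {R : Type*} [Monoid R] [StarMul R] {ω : R}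
    (hω : ω ^ k = 1) (hωs : ω ∈ unitary R) (i : Fin k) :
    ω ^ (i : ℕ) * star (ω ^ ((i - 1 : Fin k) : ℕ)) = ω := by
  obtain ⟨j, rfl⟩ : ∃ j, i = j + 1 := ⟨i - 1, (sub_add_cancel i 1).symm⟩
  rw [pow_val_add_one hω, add_sub_cancel_right, mul_assoc,
    Unitary.mul_star_self_of_mem (pow_mem hωs _), mul_one]

theorem mem_unitary_of_isOfFinOrder {𝕜 : Type*} [RCLike 𝕜] {ω : 𝕜} (hω : IsOfFinOrder ω) :
    ω ∈ unitary 𝕜 := by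
  rw [Unitary.mem_iff_star_mul_self, RCLike.star_def, RCLike.conj_mul, hω.norm_eq_one,
    RCLike.ofReal_one, one_pow]

end CyclicShift

section Window

variable {m d : ℕ}

/-- The `m` consecutive elements of `Fin d` starting at `s`. If fewer than `m` elements are left
from `s` on, the window is moved back to end at `d`. -/
def window (h : m ≤ d) (s : ℕ) (a : Fin m) : Fin d :=
  ⟨min s (d - m) + a, by lia⟩

theorem window_injective (h : m ≤ d) (s : ℕ) : Function.Injective (window h s) := fun _ _ hab ↦
  Fin.ext (Nat.add_left_cancel (congrArg Fin.val hab))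

theorem exists_window_mul_eq (h : m ≤ d) {N : ℕ} (hN : d ≤ N * m) (b : Fin d) :
    ∃ (j : Fin N) (a : Fin m), window h (j * m) a = b := by
  have hj : (b : ℕ) / m < N := Nat.div_lt_of_lt_mul (by lia)
  have hm : 0 < m := Nat.pos_of_mul_pos_left (b.pos.trans_le hN)
  have hlo : (b : ℕ) / m * m ≤ b := Nat.div_mul_le_self b m
  have hhi : (b : ℕ) < b / m * m + m := Nat.lt_div_mul_add hm
  refine ⟨⟨b / m, hj⟩, ⟨b - min (b / m * m) (d - m), by lia⟩, Fin.ext ?_⟩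
  simp only [window]
  lia

end Window

section Eigenspaces

variable {𝕜 : Type*} [RCLike 𝕜]

section Normal

variable {E : Type*} [NormedAddCommGroup E] [InnerProductSpace 𝕜 E] [CompleteSpace E]
  {T : E →L[𝕜] E}

theorem adjoint_apply_eq_smul_of_isStarNormal (hT : IsStarNormal T) {μ : 𝕜} {x : E}
    (hx : T x = μ • x) : ContinuousLinearMap.adjoint T x = star μ • x := by
  have hTμ : IsStarNormal (T - μ • 1) := by
    have : IsStarNormal (μ • (1 : E →L[𝕜] E)) := .smul μ 1
    refine Commute.isStarNormal_sub ?_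
    rw [star_smul, star_one]
    exact (Commute.one_right T).smul_right (star μ)
  have hker : ContinuousLinearMap.adjoint (T - μ • 1) x = 0 :=
    (ContinuousLinearMap.IsStarNormal.adjoint_apply_eq_zero_iff hTμ x).2 (by simp [hx])
  rw [← ContinuousLinearMap.star_eq_adjoint, star_sub, star_smul, star_one] at hker
  exact sub_eq_zero.1 hker

theorem orthogonalFamily_eigenspaces_of_isStarNormal (hT : IsStarNormal T) :
    OrthogonalFamily 𝕜 (fun μ ↦ End.eigenspace (T : End 𝕜 E) μ)
      fun μ ↦ (End.eigenspace (T : End 𝕜 E) μ).subtypeₗᵢ := by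
  rintro μ ν hμν ⟨v, hv⟩ ⟨w, hw⟩
  rw [End.mem_eigenspace_iff, ContinuousLinearMap.coe_coe] at hv hw
  have h : ν * inner 𝕜 v w = μ * inner 𝕜 v w := by
    calc ν * inner 𝕜 v w = inner 𝕜 v (T w) := by rw [hw, inner_smul_right]
      _ = inner 𝕜 (ContinuousLinearMap.adjoint T v) w := by
        rw [ContinuousLinearMap.adjoint_inner_left]
      _ = μ * inner 𝕜 v w := by
        rw [adjoint_apply_eq_smul_of_isStarNormal hT hv, inner_smul_left, starRingEnd_apply,
          star_star]
  exact (mul_eq_mul_right_iff.1 h).resolve_left hμν.symm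

theorem exists_orthonormal_eigenvectors {κ : Type*} (hT : IsStarNormal T) {c : κ → 𝕜}
    (hc : c.Injective) [∀ i, FiniteDimensional 𝕜 (End.eigenspace (T : End 𝕜 E) (c i))] {d : κ → ℕ}
    (hd : ∀ i, finrank 𝕜 (End.eigenspace (T : End 𝕜 E) (c i)) = d i) :
    ∃ v : (Σ i, Fin (d i)) → E, Orthonormal 𝕜 v ∧ ∀ p, T (v p) = c p.1 • v p := by
  let b (i : κ) : OrthonormalBasis (Fin (d i)) 𝕜 (End.eigenspace (T : End 𝕜 E) (c i)) :=
    (stdOrthonormalBasis 𝕜 _).reindex (finCongr (hd i))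
  exact ⟨fun p ↦ b p.1 p.2,
    ((orthogonalFamily_eigenspaces_of_isStarNormal hT).comp hc).orthonormal_sigma_orthonormal
      fun i ↦ (b i).orthonormal,
    fun p ↦ End.mem_eigenspace_iff.1 (b p.1 p.2).2⟩

end Normal

variable {ι : Type*} [Fintype ι]

theorem conjTranspose_mul_self_of_orthonormal {β : Type*} [DecidableEq β]
    {v : β → EuclideanSpace 𝕜 ι} (hv : Orthonormal 𝕜 v) :
    (of fun s p ↦ v p s)ᴴ * of (fun s p ↦ v p s) = (1 : Matrix β β 𝕜) := by
  rw [← gram_eq_one_iff_orthonormal.2 hv]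
  exact (gram_eq_conjTranspose_mul (EuclideanSpace.basisFun ι 𝕜) v).symm

variable [DecidableEq ι]

theorem finrank_eigenspace_toEuclideanLin (u : Matrix ι ι 𝕜) (μ : 𝕜) :
    finrank 𝕜 (End.eigenspace (toEuclideanLin u) μ) =
      finrank 𝕜 (End.eigenspace (toLin' u) μ) := by
  have hmap : (End.eigenspace (toEuclideanLin u) μ).map
      (WithLp.linearEquiv 2 𝕜 (ι → 𝕜)).toLinearMap = End.eigenspace (toLin' u) μ := by
    ext y
    rw [Submodule.mem_map_equiv, End.mem_eigenspace_iff, End.mem_eigenspace_iff]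
    exact (WithLp.ofLp_injective 2).eq_iff.symm
  rw [← hmap]
  exact (LinearEquiv.finrank_map_eq _ _).symm

theorem mul_eq_mul_diagonal_of_toEuclideanLin_apply {β : Type*} [Fintype β] [DecidableEq β]
    {u : Matrix ι ι 𝕜} {c : β → 𝕜} {v : β → EuclideanSpace 𝕜 ι}
    (hv : ∀ p, toEuclideanLin u (v p) = c p • v p) :
    u * of (fun s p ↦ v p s) = of (fun s p ↦ v p s) * diagonal c := by
  ext s p
  rw [mul_diagonal, mul_comm]
  exact congrArg (fun w ↦ w.ofLp s) (hv p)

theorem exists_isometry_mul_eq_mul_diagonal {κ : Type*} [Fintype κ] [DecidableEq κ]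
    {u : Matrix ι ι 𝕜} (hu : IsStarNormal u) {c : κ → 𝕜} (hc : c.Injective) {d : κ → ℕ}
    (hd : ∀ i, finrank 𝕜 (End.eigenspace (toLin' u) (c i)) = d i) :
    ∃ U : Matrix ι (Σ i, Fin (d i)) 𝕜, Uᴴ * U = 1 ∧ u * U = U * diagonal fun p ↦ c p.1 := by
  obtain ⟨v, hv, huv⟩ := exists_orthonormal_eigenvectors
    (hu.map (toEuclideanCLM (n := ι) (𝕜 := 𝕜))) hc fun i ↦
      (finrank_eigenspace_toEuclideanLin u _).trans (hd i)
  exact ⟨_, conjTranspose_mul_self_of_orthonormal hv,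
    mul_eq_mul_diagonal_of_toEuclideanLin_apply huv⟩

end Eigenspaces

theorem exists_normal_witnesses_of_perm {𝕜 ι β γ J : Type*} [RCLike 𝕜] [Fintype ι] [DecidableEq ι]
    [Fintype β] [DecidableEq β] [Finite γ] [Fintype J] {U : Matrix ι β 𝕜}
    (hU : Uᴴ * U = 1) (hU' : U * Uᴴ = 1) {u : Matrix ι ι 𝕜} {c : β → 𝕜}
    (huU : u * U = U * diagonal c) {e : J → γ → β} (he : ∀ j, (e j).Injective)
    (he' : ∀ b, ∃ j a, e j a = b) {σ : Equiv.Perm γ} {k : ℕ} (hσ : σ ^ k = 1) {ω : 𝕜}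
    (hc : ∀ j p, c (e j p) * star (c (e j (σ p))) = ω) :
    ∃ x : J → Matrix ι ι 𝕜,
      (∀ j, x j * star (x j) = star (x j) * x j) ∧
      (∀ j, spectrum 𝕜 (x j) ⊆ {z | z = 0 ∨ z ^ k = 1}) ∧
      (∀ j, u * x j * star u = ω • x j) ∧
      IsUnit (∑ j, x j * star (x j)) := by
  classical
  cases nonempty_fintype γ
  have hV (j) := conjTranspose_submatrix_mul_submatrix hU (he j)
  have hS := permMatrix_mem_unitary (R := 𝕜) σ
  have hSk : σ.permMatrix 𝕜 ^ k = 1 := by rw [permMatrix_pow, hσ, permMatrix_one]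
  refine ⟨fun j ↦ isometryConj _ (hV j) (σ.permMatrix 𝕜), fun j ↦ ?_, fun j ↦ ?_, fun j ↦ ?_, ?_⟩
  · exact ((isStarNormal_of_mem_unitary hS).map (isometryConj _ (hV j))).star_comm_self.eq.symm
  · exact spectrum_map_subset_of_pow_eq_one
      (isometryConj _ (hV j) : Matrix γ γ 𝕜 →ₙₐ[𝕜] Matrix ι ι 𝕜) hSk
  · rw [mul_isometryConj_mul_star (hV j) (mul_submatrix_eq_submatrix_mul_diagonal huU (e j)),
      diagonal_mul_permMatrix_mul_star (c := c ∘ e j) σ (hc j), map_smul]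
  · simp only [isometryConj_mul_star_self _ hS]
    exact isUnit_sum_submatrix_mul_conjTranspose hU' he'

theorem exists_normal_witnesses_weak_dim_general {𝕜 ι : Type*} [RCLike 𝕜] [Fintype ι]
    [DecidableEq ι] {k : ℕ} [NeZero k] {ω : 𝕜} (hω : IsPrimitiveRoot ω k) {d : Fin k → ℕ}
    (hd : Fintype.card ι = ∑ i, d i) {u : Matrix ι ι 𝕜} (hu : IsStarNormal u)
    (heig : ∀ i : Fin k, finrank 𝕜 (End.eigenspace (toLin' u) (ω ^ (i : ℕ))) = d i) {m N : ℕ}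
    (hm : ∀ i, m ≤ d i) (hN : ∀ i, d i ≤ N * m) :
    ∃ x : Fin N → Matrix ι ι 𝕜,
      (∀ j, x j * star (x j) = star (x j) * x j) ∧
      (∀ j, spectrum 𝕜 (x j) ⊆ {z | z = 0 ∨ z ^ k = 1}) ∧
      (∀ j, u * x j * star u = ω • x j) ∧
      IsUnit (∑ j, x j * star (x j)) := by
  obtain ⟨U, hU, huU⟩ :=
    exists_isometry_mul_eq_mul_diagonal hu (fun i j h ↦ Fin.ext (hω.pow_inj i.2 j.2 h)) heig
  have hU' : U * Uᴴ = 1 :=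
    (mul_eq_one_comm_of_equiv (Fintype.equivOfCardEq (by simpa using hd))).2 hU
  let e (j : Fin N) (p : Fin k × Fin m) : Σ i, Fin (d i) := ⟨p.1, window (hm p.1) (j * m) p.2⟩
  have he (j) : (e j).Injective := by
    rintro ⟨i, a⟩ ⟨i', a'⟩ h
    obtain ⟨rfl, h⟩ := Sigma.mk.inj_iff.1 h
    exact congrArg (i, ·) (window_injective _ _ (eq_of_heq h))
  have he' (b) : ∃ j p, e j p = b := by
    obtain ⟨i, b⟩ := b
    obtain ⟨j, a, rfl⟩ := exists_window_mul_eq (hm i) (hN i) b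
    exact ⟨j, (i, a), rfl⟩
  exact exists_normal_witnesses_of_perm hU hU' huU he he' (cyclicShift_pow_self k (Fin m))
    fun _ p ↦ pow_val_mul_star_pow_val_sub_one hω.pow_eq_one
      (mem_unitary_of_isOfFinOrder (hω.isOfFinOrder (NeZero.ne k))) p.1

theorem exists_normal_witnesses_weak_dim
    (k : ℕ) (hk : 2 ≤ k) (ω : ℂ)
    (hω : ω = Complex.exp (2 * Real.pi * Complex.I / k))
    (d : Fin k → ℕ) (hd : ∀ i, 1 ≤ d i) (n : ℕ) (hn : n = ∑ i, d i)
    (u : Matrix (Fin n) (Fin n) ℂ) (hu : star u * u = 1) (huk : u ^ k = 1)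
    (heig : ∀ i : Fin k,
      Module.finrank ℂ
        (LinearMap.ker (Matrix.toLin' (u - ω ^ (i : ℕ) • (1 : Matrix (Fin n) (Fin n) ℂ)))) = d i)
    (M m : ℕ) (hM : ∀ i, d i ≤ M) (hM' : ∃ i, d i = M)
    (hm : ∀ i, m ≤ d i) (hm' : ∃ i, d i = m) :
    ∃ x : Fin ((M + m - 1) / m) → Matrix (Fin n) (Fin n) ℂ,
      (∀ j, x j * star (x j) = star (x j) * x j) ∧
      (∀ j, spectrum ℂ (x j) ⊆ {z : ℂ | z = 0 ∨ z ^ k = 1}) ∧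
      (∀ j, u * x j * star u = ω • x j) ∧
      IsUnit (∑ j, x j * star (x j)) := by
  have : NeZero k := ⟨by lia⟩
  have hprim : IsPrimitiveRoot ω k := hω ▸ Complex.isPrimitiveRoot_exp k (NeZero.ne k)
  have hm₀ : 0 < m := hm'.elim fun i hi ↦ hi ▸ hd i
  refine exists_normal_witnesses_weak_dim_general hprim (by simpa using hn)
    (isStarNormal_of_mem_unitary (mem_unitaryGroup_iff'.2 hu)) (fun i ↦ ?_) hm fun i ↦ ?_
  · rw [← heig i, End.eigenspace_def, map_sub, map_smul, toLin'_one]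
    rfl
  · have : M + m - 1 < (M + m - 1) / m * m + m := Nat.lt_div_mul_add hm₀
    have := hM i
    lia
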